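/- Let (Φ₁,Φ₂) be a branching mechanism and V the unique solution of the cumulant equations (3.8). Then for every t ≥ 0 and x ∈ 𝕄 there exists a unique Borel probability measure P_t(x,·) on 𝕄 such that ∫_𝕄 e^{−⟨λ,y⟩} P_t(x,dy) = exp(−⟨x, V(t,λ)⟩) for all λ ∈ [0,∞)², and these measures form a Markov transition semigroup: ∫_𝕄 P_s(y, A) P_t(x, dy) = P_{t+s}(x, A) for all Borel sets A ⊆ 𝕄, all s, t ≥ 0 and x ∈ 𝕄. -/

import Mathlib

open MeasureTheory Filter Set

noncomputable section

/-- The state space `𝕄 = [0,∞) × ℕ`, as a subset of `ℝ²`. -/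
def Mset : Set (ℝ × ℝ) := {z | 0 ≤ z.1 ∧ ∃ n : ℕ, z.2 = (n : ℝ)}

/-- The space `𝕄₋₁ = [0,∞) × (ℕ ∪ {-1})`, as a subset of `ℝ²`. -/
def Mm1set : Set (ℝ × ℝ) := {z | 0 ≤ z.1 ∧ ∃ n : ℤ, (-1 : ℤ) ≤ n ∧ z.2 = (n : ℝ)}

/-- The data of a branching mechanism `(Φ₁, Φ₂)` of a mixed state branching process. -/
structure BranchingMechanism where
  a11 : ℝ
  a21 : ℝ
  alpha : ℝ
  a21_nonneg : 0 ≤ a21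
  alpha_nonneg : 0 ≤ alpha
  n1 : Measure (ℝ × ℝ)
  n2 : Measure (ℝ × ℝ)
  n1_sigmaFinite : SigmaFinite n1
  n2_sigmaFinite : SigmaFinite n2
  /-- `n₁` is supported on `𝕄` -/
  n1_supp : n1 Msetᶜ = 0
  /-- `n₂` is supported on `𝕄₋₁` -/
  n2_supp : n2 Mm1setᶜ = 0
  /-- `n₁` does not charge the origin -/
  n1_zero : n1 {0} = 0
  /-- `n₂` does not charge the origin -/
  n2_zero : n2 {0} = 0
  /-- `n₂([0,∞) × {-1}) < ∞` -/
  n2_neg1 : n2 {z : ℝ × ℝ | z.2 = -1} ≠ ⊤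
  /-- `∫ (z₁ ∧ z₁² + z₂) n₁(dz) < ∞` -/
  n1_moment : ∫⁻ z, ENNReal.ofReal (min z.1 (z.1 ^ 2) + z.2) ∂n1 ≠ ⊤
  /-- `∫ (z₁ + |z₂|) n₂(dz) < ∞` -/
  n2_moment : ∫⁻ z, ENNReal.ofReal (z.1 + |z.2|) ∂n2 ≠ ⊤

/-- `Φ₁(λ) = -a₁₁λ₁ - αλ₁² - ∫ (e^{-⟨λ,z⟩} - 1 + λ₁z₁) n₁(dz)`. -/
def mPhi1 (B : BranchingMechanism) (l : ℝ × ℝ) : ℝ :=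
  -B.a11 * l.1 - B.alpha * l.1 ^ 2 -
    ∫ z, (Real.exp (-(l.1 * z.1 + l.2 * z.2)) - 1 + l.1 * z.1) ∂B.n1

/-- `Φ₂(λ) = a₂₁λ₁ + ∫ (1 - e^{-⟨λ,z⟩}) n₂(dz)`. -/
def mPhi2 (B : BranchingMechanism) (l : ℝ × ℝ) : ℝ :=
  B.a21 * l.1 + ∫ z, (1 - Real.exp (-(l.1 * z.1 + l.2 * z.2))) ∂B.n2


/-- `V : t ↦ V(t,λ)` is a continuous `[0,∞)²`-valued solution of the cumulant
equations (3.8) with initial value `λ = l`. -/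
def SolvesCumulant (B : BranchingMechanism) (l : ℝ × ℝ) (V : ℝ → ℝ × ℝ) : Prop :=
  ContinuousOn V (Ici 0) ∧
  (∀ t : ℝ, 0 ≤ t → 0 ≤ (V t).1 ∧ 0 ≤ (V t).2) ∧
  (∀ t : ℝ, 0 ≤ t →
    (V t).1 = l.1 + ∫ s in (0:ℝ)..t, mPhi1 B (V s) ∧
    (V t).2 = l.2 + ∫ s in (0:ℝ)..t, mPhi2 B (V s))

open scoped Topology NNReal BoundedContinuousFunction CompactlySupported

/-!
Fix `t ≥ 0` and `x ∈ 𝕄`. The heart of the matter is that `l ↦ e^{-⟨x, V(t, l)⟩}` is a positive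
functional of the Laplace kernels: if `∑ᵢ cᵢ e^{-⟨lᵢ, y⟩} ≥ 0` for all `y ∈ 𝕄`, then
`∑ᵢ cᵢ e^{-⟨x, V(t, lᵢ)⟩} ≥ 0`. Indeed `u(t, y) = ∑ᵢ cᵢ e^{-⟨V(t, lᵢ), y⟩}` solves a Kolmogorov
backward equation whose operator is the pointwise generator of the would-be process, and a minimum
principle keeps `u` nonnegative. A positive functional on the span of the kernels extends to all
bounded continuous functions on `𝕄` (M. Riesz) and is there given by a measure on functions
vanishing at infinity (Riesz–Markov–Kakutani); the continuity of `V(t, ·)` at the boundary of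
`[0,∞)²` shows that no mass is lost. In the coordinates `(e^{-y₁}, e^{-y₂})` the Laplace kernels
are multiplicative and separate the points of the unit square, so by Stone–Weierstrass they
determine a probability measure, measurably in parameters; the flow property
`V(t, V(s, l)) = V(s + t, l)` then gives the Chapman–Kolmogorov equation.
-/

/-- The kernel `e^{-⟨l, z⟩}` of the bivariate Laplace transform. -/
def laplaceKernel (l z : ℝ × ℝ) : ℝ := Real.exp (-(l.1 * z.1 + l.2 * z.2))

section LaplaceKernel

variable (l m z : ℝ × ℝ)

lemma laplaceKernel_pos : 0 < laplaceKernel l z := Real.exp_pos _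

lemma laplaceKernel_comm : laplaceKernel l z = laplaceKernel z l := by
  simp only [laplaceKernel, mul_comm]

lemma laplaceKernel_zero_left : laplaceKernel 0 z = 1 := by simp [laplaceKernel]

lemma laplaceKernel_add_left :
    laplaceKernel (l + m) z = laplaceKernel l z * laplaceKernel m z := by
  simp only [laplaceKernel, ← Real.exp_add, Prod.fst_add, Prod.snd_add]
  ring_nf

lemma laplaceKernel_add_right :
    laplaceKernel l (z + m) = laplaceKernel l z * laplaceKernel l m := by
  simp only [laplaceKernel_comm l, laplaceKernel_add_left]

@[fun_prop]
lemma continuous_laplaceKernel : Continuous (laplaceKernel l) := by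
  unfold laplaceKernel; fun_prop

lemma hasFDerivAt_laplaceKernel :
    HasFDerivAt (fun l => laplaceKernel l z)
      (-laplaceKernel l z • (z.1 • ContinuousLinearMap.fst ℝ ℝ ℝ +
        z.2 • ContinuousLinearMap.snd ℝ ℝ ℝ)) l := by
  have h := ((hasFDerivAt_fst (𝕜 := ℝ) (p := l)).mul_const z.1).add
    ((hasFDerivAt_snd (𝕜 := ℝ) (p := l)).mul_const z.2)
  exact h.neg.exp.congr_fderiv (by rw [smul_neg, ← neg_smul]; rfl)

variable {l z}

lemma one_sub_laplaceKernel_le : 1 - laplaceKernel l z ≤ l.1 * z.1 + l.2 * z.2 := by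
  have := Real.add_one_le_exp (-(l.1 * z.1 + l.2 * z.2))
  unfold laplaceKernel
  linarith

lemma laplaceKernel_le_one (hl : 0 ≤ l) (hz : 0 ≤ z) : laplaceKernel l z ≤ 1 :=
  Real.exp_le_one_iff.2 <| neg_nonpos.2 <|
    add_nonneg (mul_nonneg hl.1 hz.1) (mul_nonneg hl.2 hz.2)

end LaplaceKernel

lemma Iic_add_one_mem_nhds (l : ℝ × ℝ) : Iic (l + 1) ∈ 𝓝 l :=
  prod_mem_nhds (Iic_mem_nhds (lt_add_one l.1)) (Iic_mem_nhds (lt_add_one l.2))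

lemma Mset_nonneg {z : ℝ × ℝ} (hz : z ∈ Mset) : 0 ≤ z := by
  obtain ⟨hz₁, n, hn⟩ := hz
  exact ⟨hz₁, hn ▸ n.cast_nonneg⟩

lemma min_add_snd_nonneg {z : ℝ × ℝ} (hz : z ∈ Mset) : 0 ≤ min z.1 (z.1 ^ 2) + z.2 :=
  add_nonneg (le_min hz.1 (sq_nonneg _)) (Mset_nonneg hz).2

lemma mul_one_sub_laplaceKernel_le {b l z : ℝ × ℝ} (hl : l ∈ Icc 0 b) (hz : z ∈ Mset) :
    z.1 * (1 - laplaceKernel l z) ≤ (1 + b.1) * (min z.1 (z.1 ^ 2) + z.2) := by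
  have hz₁ : 0 ≤ z.1 := hz.1
  have hl₁ : 0 ≤ l.1 := hl.1.1
  have hlb : l.1 ≤ b.1 := hl.2.1
  have trivial_bound : z.1 * (1 - laplaceKernel l z) ≤ z.1 := by
    nlinarith [laplaceKernel_pos l z]
  obtain ⟨-, n, hn⟩ := hz
  rcases n.eq_zero_or_pos with rfl | hpos
  · have hz₂ : z.2 = 0 := by simpa using hn
    have quadratic_bound : z.1 * (1 - laplaceKernel l z) ≤ l.1 * z.1 ^ 2 := by
      have := mul_le_mul_of_nonneg_left (one_sub_laplaceKernel_le (l := l) (z := z)) hz₁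
      rw [hz₂] at this
      linarith
    rw [hz₂, add_zero]
    rcases min_choice z.1 (z.1 ^ 2) with h | h <;> rw [h]
    · nlinarith
    · nlinarith [sq_nonneg z.1]
  · have hz₂ : 1 ≤ z.2 := by rw [hn]; exact_mod_cast hpos
    have : z.1 ≤ min z.1 (z.1 ^ 2) + z.2 := by
      rcases min_choice z.1 (z.1 ^ 2) with h | h <;> rw [h] <;> nlinarith [sq_nonneg (z.1 - 1)]
    nlinarith

lemma norm_smul_fst_add_smul_snd_le (a b : ℝ) :
    ‖a • ContinuousLinearMap.fst ℝ ℝ ℝ + b • ContinuousLinearMap.snd ℝ ℝ ℝ‖ ≤ |a| + |b| := by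
  refine (norm_add_le _ _).trans (add_le_add ?_ ?_) <;> rw [norm_smul, Real.norm_eq_abs]
  · exact mul_le_of_le_one_right (abs_nonneg a) (ContinuousLinearMap.norm_fst_le ℝ ℝ ℝ)
  · exact mul_le_of_le_one_right (abs_nonneg b) (ContinuousLinearMap.norm_snd_le ℝ ℝ ℝ)

lemma abs_compensated_kernel_sub_le {b z : ℝ × ℝ} (hz : z ∈ Mset) {l m : ℝ × ℝ}
    (hl : l ∈ Icc 0 b) (hm : m ∈ Icc 0 b) :
    |(laplaceKernel l z - 1 + l.1 * z.1) - (laplaceKernel m z - 1 + m.1 * z.1)| ≤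
      (2 + b.1) * (min z.1 (z.1 ^ 2) + z.2) * dist l m := by
  have hz₀ := Mset_nonneg hz
  have deriv_bound : ∀ p ∈ Icc 0 b, ‖(z.1 * (1 - laplaceKernel p z)) •
      ContinuousLinearMap.fst ℝ ℝ ℝ + (-laplaceKernel p z * z.2) •
      ContinuousLinearMap.snd ℝ ℝ ℝ‖ ≤ (2 + b.1) * (min z.1 (z.1 ^ 2) + z.2) := by
    intro p hp
    have hk := laplaceKernel_le_one hp.1 hz₀
    have hmin : 0 ≤ min z.1 (z.1 ^ 2) := le_min hz₀.1 (sq_nonneg _)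
    refine (norm_smul_fst_add_smul_snd_le _ _).trans ?_
    rw [abs_of_nonneg (mul_nonneg hz₀.1 (sub_nonneg.2 hk)), abs_mul, abs_neg,
      abs_of_pos (laplaceKernel_pos p z), abs_of_nonneg hz₀.2]
    nlinarith [mul_one_sub_laplaceKernel_le hp hz, mul_le_of_le_one_left hz₀.2 hk]
  have hderiv : ∀ p ∈ Icc 0 b, HasFDerivWithinAt
      (fun p : ℝ × ℝ => laplaceKernel p z - 1 + p.1 * z.1)
      ((z.1 * (1 - laplaceKernel p z)) • ContinuousLinearMap.fst ℝ ℝ ℝ +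
        (-laplaceKernel p z * z.2) • ContinuousLinearMap.snd ℝ ℝ ℝ) (Icc 0 b) p := by
    intro p _
    refine ((((hasFDerivAt_laplaceKernel p z).sub_const 1).add
      (hasFDerivAt_fst.mul_const z.1)).congr_fderiv ?_).hasFDerivWithinAt
    module
  simpa [dist_eq_norm] using
    (convex_Icc 0 b).norm_image_sub_le_of_norm_hasFDerivWithin_le hderiv deriv_bound hm hl

lemma laplaceKernel_le_exp {b l z : ℝ × ℝ} (hl : l ∈ Icc 0 b) (hz : z ∈ Mm1set) :
    laplaceKernel l z ≤ Real.exp b.2 := by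
  obtain ⟨hz₁, n, hn, hzn⟩ := hz
  have hz₂ : -1 ≤ z.2 := by rw [hzn]; exact_mod_cast hn
  have : l.2 ≤ b.2 := hl.2.2
  refine Real.exp_le_exp.2 ?_
  nlinarith [mul_nonneg hl.1.1 hz₁, mul_nonneg hl.1.2 (by linarith : 0 ≤ z.2 + 1)]

lemma abs_laplaceKernel_sub_le {b z : ℝ × ℝ} (hz : z ∈ Mm1set) {l m : ℝ × ℝ}
    (hl : l ∈ Icc 0 b) (hm : m ∈ Icc 0 b) :
    |laplaceKernel l z - laplaceKernel m z| ≤ Real.exp b.2 * (z.1 + |z.2|) * dist l m := by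
  have deriv_bound : ∀ p ∈ Icc 0 b, ‖-laplaceKernel p z • (z.1 • ContinuousLinearMap.fst ℝ ℝ ℝ +
      z.2 • ContinuousLinearMap.snd ℝ ℝ ℝ)‖ ≤ Real.exp b.2 * (z.1 + |z.2|) := by
    intro p hp
    rw [norm_smul, norm_neg, Real.norm_of_nonneg (laplaceKernel_pos p z).le]
    gcongr
    · exact laplaceKernel_le_exp hp hz
    · simpa only [abs_of_nonneg hz.1] using norm_smul_fst_add_smul_snd_le z.1 z.2
  simpa [dist_eq_norm] using (convex_Icc 0 b).norm_image_sub_le_of_norm_hasFDerivWithin_le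
    (fun p _ => (hasFDerivAt_laplaceKernel p z).hasFDerivWithinAt) deriv_bound hm hl

lemma lipschitzOnWith_integral {α E : Type*} [MeasurableSpace α] [PseudoMetricSpace E]
    {μ : Measure α} {F : E → α → ℝ} {K : α → ℝ} {s : Set E} (hK : Integrable K μ)
    (hF : ∀ l ∈ s, Integrable (F l) μ)
    (hlip : ∀ l ∈ s, ∀ m ∈ s, ∀ᵐ z ∂μ, |F l z - F m z| ≤ K z * dist l m) :
    LipschitzOnWith (∫ z, K z ∂μ).toNNReal (fun l => ∫ z, F l z ∂μ) s := by
  refine LipschitzOnWith.of_dist_le_mul fun l hl m hm => ?_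
  calc dist (∫ z, F l z ∂μ) (∫ z, F m z ∂μ)
      = ‖∫ z, (F l z - F m z) ∂μ‖ := by rw [dist_eq_norm, integral_sub (hF l hl) (hF m hm)]
    _ ≤ ∫ z, K z * dist l m ∂μ :=
        norm_integral_le_of_norm_le (hK.mul_const _) (hlip l hl m hm)
    _ = (∫ z, K z ∂μ) * dist l m := integral_mul_const ..
    _ ≤ (∫ z, K z ∂μ).toNNReal * dist l m := by
        gcongr; exact Real.le_coe_toNNReal _

namespace BranchingMechanism

variable (B : BranchingMechanism)

/-- The pair `Φ = (Φ₁, Φ₂)`, the vector field on `[0,∞)²` driving the cumulant equations. -/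
def Phi (l : ℝ × ℝ) : ℝ × ℝ := (mPhi1 B l, mPhi2 B l)

lemma ae_mem_Mset : ∀ᵐ z ∂B.n1, z ∈ Mset := B.n1_supp

lemma ae_mem_Mm1set : ∀ᵐ z ∂B.n2, z ∈ Mm1set := B.n2_supp

lemma integrable_min_add_snd : Integrable (fun z => min z.1 (z.1 ^ 2) + z.2) B.n1 := by
  refine ⟨by fun_prop, ?_⟩
  have hnonneg := B.ae_mem_Mset.mono fun z => min_add_snd_nonneg
  exact (hasFiniteIntegral_iff_ofReal hnonneg).2 B.n1_moment.lt_top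

lemma integrable_fst_add_abs_snd : Integrable (fun z => z.1 + |z.2|) B.n2 := by
  refine ⟨by fun_prop, ?_⟩
  have hnonneg := B.ae_mem_Mm1set.mono fun z hz => add_nonneg hz.1 (abs_nonneg z.2)
  exact (hasFiniteIntegral_iff_ofReal hnonneg).2 B.n2_moment.lt_top

variable {l : ℝ × ℝ}

lemma integrable_compensated_kernel (hl : 0 ≤ l) :
    Integrable (fun z => laplaceKernel l z - 1 + l.1 * z.1) B.n1 := by
  refine ((B.integrable_min_add_snd.const_mul (2 + l.1)).mul_const (dist l 0)).mono'
    (by fun_prop) ?_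
  filter_upwards [B.ae_mem_Mset] with z hz
  simpa [laplaceKernel_zero_left] using
    abs_compensated_kernel_sub_le hz (right_mem_Icc.2 hl) (left_mem_Icc.2 hl)

lemma integrable_laplaceKernel_sub_one (hl : 0 ≤ l) :
    Integrable (fun z => laplaceKernel l z - 1) B.n2 := by
  refine ((B.integrable_fst_add_abs_snd.const_mul (Real.exp l.2)).mul_const (dist l 0)).mono'
    (by fun_prop) ?_
  filter_upwards [B.ae_mem_Mm1set] with z hz
  simpa [laplaceKernel_zero_left] using
    abs_laplaceKernel_sub_le hz (right_mem_Icc.2 hl) (left_mem_Icc.2 hl)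

lemma mPhi1_eq (l : ℝ × ℝ) : mPhi1 B l = -B.a11 * l.1 - B.alpha * l.1 ^ 2 -
    ∫ z, (laplaceKernel l z - 1 + l.1 * z.1) ∂B.n1 := rfl

lemma mPhi2_eq (l : ℝ × ℝ) : mPhi2 B l = B.a21 * l.1 - ∫ z, (laplaceKernel l z - 1) ∂B.n2 := by
  rw [mPhi2, sub_eq_add_neg, ← integral_neg]
  simp only [neg_sub, laplaceKernel]

lemma exists_lipschitzOnWith_Phi (b : ℝ × ℝ) : ∃ K, LipschitzOnWith K B.Phi (Icc 0 b) := by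
  have polynomial_part : ContDiff ℝ 1 fun l : ℝ × ℝ =>
      (-B.a11 * l.1 - B.alpha * l.1 ^ 2, B.a21 * l.1) := by fun_prop
  obtain ⟨K, hK⟩ := polynomial_part.contDiffOn.exists_lipschitzOnWith one_ne_zero
    (convex_Icc 0 b) isCompact_Icc
  have n1_part := lipschitzOnWith_integral (s := Icc 0 b)
    (B.integrable_min_add_snd.const_mul (2 + b.1))
    (fun l hl => B.integrable_compensated_kernel hl.1)
    (fun l hl m hm => B.ae_mem_Mset.mono fun z hz => abs_compensated_kernel_sub_le hz hl hm)
  have n2_part := lipschitzOnWith_integral (s := Icc 0 b)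
    (B.integrable_fst_add_abs_snd.const_mul (Real.exp b.2))
    (fun l hl => B.integrable_laplaceKernel_sub_one hl.1)
    (fun l hl m hm => B.ae_mem_Mm1set.mono fun z hz => by
      simpa using abs_laplaceKernel_sub_le hz hl hm)
  have decomposition : B.Phi = fun l => (-B.a11 * l.1 - B.alpha * l.1 ^ 2, B.a21 * l.1) -
      (∫ z, (laplaceKernel l z - 1 + l.1 * z.1) ∂B.n1, ∫ z, (laplaceKernel l z - 1) ∂B.n2) :=
    funext fun l => Prod.ext (mPhi1_eq B l) (mPhi2_eq B l)
  exact ⟨_, decomposition ▸ hK.sub (n1_part.prodMk n2_part)⟩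

lemma continuousOn_Phi : ContinuousOn B.Phi (Ici 0) := by
  intro l hl
  obtain ⟨K, hK⟩ := B.exists_lipschitzOnWith_Phi (l + 1)
  refine (hK.continuousOn l ⟨hl, le_add_of_nonneg_right zero_le_one⟩).mono_of_mem_nhdsWithin ?_
  exact inter_mem self_mem_nhdsWithin (mem_nhdsWithin_of_mem_nhds (Iic_add_one_mem_nhds l))

lemma exists_mPhi1_add_mPhi2_le :
    ∃ C, 0 ≤ C ∧ ∀ l, 0 ≤ l → mPhi1 B l + mPhi2 B l ≤ C * (l.1 + l.2) := by
  set I₁ := ∫ z, (min z.1 (z.1 ^ 2) + z.2) ∂B.n1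
  set I₂ := ∫ z, (z.1 + |z.2|) ∂B.n2
  have hI₁ : 0 ≤ I₁ := integral_nonneg_of_ae (B.ae_mem_Mset.mono fun z => min_add_snd_nonneg)
  have hI₂ : 0 ≤ I₂ := integral_nonneg_of_ae <|
    B.ae_mem_Mm1set.mono fun z hz => add_nonneg hz.1 (abs_nonneg _)
  refine ⟨|B.a11| + B.a21 + I₁ + I₂, by have := B.a21_nonneg; positivity, fun l hl => ?_⟩
  have hl₁ : 0 ≤ l.1 := hl.1
  have hl₂ : 0 ≤ l.2 := hl.2
  have h₁ : -(l.2 * I₁) ≤ ∫ z, (laplaceKernel l z - 1 + l.1 * z.1) ∂B.n1 := by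
    rw [← integral_const_mul, ← integral_neg]
    refine integral_mono_ae (B.integrable_min_add_snd.const_mul _).neg
      (B.integrable_compensated_kernel hl) ?_
    filter_upwards [B.ae_mem_Mset] with z hz
    have hmin : 0 ≤ min z.1 (z.1 ^ 2) := le_min hz.1 (sq_nonneg _)
    nlinarith [one_sub_laplaceKernel_le (l := l) (z := z), mul_nonneg hl₂ hmin]
  have h₂ : -((l.1 + l.2) * I₂) ≤ ∫ z, (laplaceKernel l z - 1) ∂B.n2 := by
    rw [← integral_const_mul, ← integral_neg]
    refine integral_mono_ae (B.integrable_fst_add_abs_snd.const_mul _).neg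
      (B.integrable_laplaceKernel_sub_one hl) ?_
    filter_upwards [B.ae_mem_Mm1set] with z hz
    nlinarith [one_sub_laplaceKernel_le (l := l) (z := z), mul_nonneg hl₂ hz.1,
      mul_nonneg hl₁ (abs_nonneg z.2), mul_le_mul_of_nonneg_left (le_abs_self z.2) hl₂]
  rw [mPhi1_eq, mPhi2_eq]
  nlinarith [mul_nonneg B.alpha_nonneg (sq_nonneg l.1), neg_abs_le B.a11,
    mul_le_mul_of_nonneg_right (neg_abs_le B.a11) hl₁, mul_nonneg (abs_nonneg B.a11) hl₂,
    mul_nonneg B.a21_nonneg hl₂, mul_nonneg hI₁ hl₁]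

end BranchingMechanism

lemma hasDerivWithinAt_integral_Ici {f : ℝ → ℝ} {a t : ℝ} (hf : ContinuousOn f (Ici a))
    (ht : a ≤ t) : HasDerivWithinAt (fun t => ∫ s in a..t, f s) (f t) (Ici a) t := by
  have extension_continuous : Continuous fun s => f (max s a) :=
    hf.comp_continuous (by fun_prop) fun s => le_max_right s a
  have h := (extension_continuous.integral_hasStrictDerivAt a t).hasDerivAt.hasDerivWithinAt
    (s := Ici a)
  rw [max_eq_left ht] at h
  refine h.congr_of_mem (fun r hr => intervalIntegral.integral_congr fun s hs => ?_) ht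
  rw [uIcc_of_le hr] at hs
  simp only [max_eq_left hs.1]

namespace SolvesCumulant

variable {B : BranchingMechanism} {l m : ℝ × ℝ} {W W' : ℝ → ℝ × ℝ} {s t : ℝ}

lemma continuousOn_Phi (hW : SolvesCumulant B l W) :
    ContinuousOn (fun s => B.Phi (W s)) (Ici 0) :=
  B.continuousOn_Phi.comp hW.1 hW.2.1

lemma intervalIntegrable_mPhi (hW : SolvesCumulant B l W) (hs : 0 ≤ s) (ht : 0 ≤ t) :
    IntervalIntegrable (fun r => mPhi1 B (W r)) volume s t ∧
      IntervalIntegrable (fun r => mPhi2 B (W r)) volume s t := by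
  have h := hW.continuousOn_Phi.mono fun r (hr : r ∈ uIcc s t) => (le_min hs ht).trans hr.1
  exact ⟨h.fst.intervalIntegrable, h.snd.intervalIntegrable⟩

lemma apply_zero (hW : SolvesCumulant B l W) : W 0 = l := by
  obtain ⟨h₁, h₂⟩ := hW.2.2 0 le_rfl
  exact Prod.ext (by simpa using h₁) (by simpa using h₂)

lemma hasDerivWithinAt (hW : SolvesCumulant B l W) (ht : 0 ≤ t) :
    HasDerivWithinAt W (B.Phi (W t)) (Ici 0) t := by
  have h₁ := (hasDerivWithinAt_integral_Ici hW.continuousOn_Phi.fst ht).const_add l.1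
  have h₂ := (hasDerivWithinAt_integral_Ici hW.continuousOn_Phi.snd ht).const_add l.2
  exact (h₁.prodMk h₂).congr_of_mem
    (fun s hs => Prod.ext (hW.2.2 s hs).1 (hW.2.2 s hs).2) ht

lemma hasDerivWithinAt_Ici (hW : SolvesCumulant B l W) (ht : 0 ≤ t) :
    HasDerivWithinAt W (B.Phi (W t)) (Ici t) t :=
  (hW.hasDerivWithinAt ht).mono (Ici_subset_Ici.2 ht)

lemma exists_fst_add_snd_le (B : BranchingMechanism) :
    ∃ C, 0 ≤ C ∧ ∀ l W, SolvesCumulant B l W → ∀ t, 0 ≤ t →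
      (W t).1 + (W t).2 ≤ (l.1 + l.2) * Real.exp (C * t) := by
  obtain ⟨C, hC, hPhi⟩ := B.exists_mPhi1_add_mPhi2_le
  refine ⟨C, hC, fun l W hW t ht => ?_⟩
  have hderiv : ∀ s, 0 ≤ s → HasDerivWithinAt (fun s => (W s).1 + (W s).2)
      (mPhi1 B (W s) + mPhi2 B (W s)) (Ici s) s := fun s hs =>
    (hasFDerivAt_fst.comp_hasDerivWithinAt s (hW.hasDerivWithinAt_Ici hs)).add
      (hasFDerivAt_snd.comp_hasDerivWithinAt s (hW.hasDerivWithinAt_Ici hs))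
  have hcont : ContinuousOn (fun s => (W s).1 + (W s).2) (Icc 0 t) :=
    (hW.1.fst.add hW.1.snd).mono Icc_subset_Ici_self
  have h := le_gronwallBound_of_liminf_deriv_right_le (δ := l.1 + l.2) (K := C) (ε := 0) hcont
    (fun s hs r hr => (hderiv s hs.1).liminf_right_slope_le hr) (by rw [hW.apply_zero])
    (fun s hs => by simpa using hPhi (W s) (hW.2.1 s hs.1)) t (right_mem_Icc.2 ht)
  rwa [gronwallBound_ε0, sub_zero] at h

lemma exists_mem_Icc (B : BranchingMechanism) (b : ℝ × ℝ) (T : ℝ) :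
    ∃ c, ∀ l ≤ b, ∀ W, SolvesCumulant B l W → ∀ t ∈ Icc 0 T, W t ∈ Icc 0 c := by
  obtain ⟨C, hC, hbound⟩ := exists_fst_add_snd_le B
  set R := |b.1 + b.2| * Real.exp (C * T) with hR
  refine ⟨(R, R), fun l hl W hW t ht => ?_⟩
  have hnonneg : 0 ≤ W t := hW.2.1 t ht.1
  have hsum : (W t).1 + (W t).2 ≤ R := by
    refine (hbound l W hW t ht.1).trans ?_
    have : l.1 + l.2 ≤ |b.1 + b.2| := (add_le_add hl.1 hl.2).trans (le_abs_self _)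
    rw [hR]
    gcongr
    exact ht.2
  have h₁ : 0 ≤ (W t).1 := hnonneg.1
  have h₂ : 0 ≤ (W t).2 := hnonneg.2
  exact ⟨hnonneg, by linarith, by linarith⟩

lemma exists_dist_le (B : BranchingMechanism) (b : ℝ × ℝ) (T : ℝ) :
    ∃ K, ∀ l ≤ b, ∀ m ≤ b, ∀ W W', SolvesCumulant B l W → SolvesCumulant B m W' →
      ∀ t ∈ Icc 0 T, dist (W t) (W' t) ≤ dist l m * K := by
  obtain ⟨c, hc⟩ := exists_mem_Icc B b T
  obtain ⟨K, hK⟩ := B.exists_lipschitzOnWith_Phi c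
  refine ⟨Real.exp (K * T), fun l hl m hm W W' hW hW' t ht => ?_⟩
  have h := dist_le_of_trajectories_ODE_of_mem (δ := dist l m) (fun _ _ => hK)
    (hW.1.mono Icc_subset_Ici_self) (fun s hs => hW.hasDerivWithinAt_Ici hs.1)
    (fun s hs => hc l hl W hW s (Ico_subset_Icc_self hs))
    (hW'.1.mono Icc_subset_Ici_self) (fun s hs => hW'.hasDerivWithinAt_Ici hs.1)
    (fun s hs => hc m hm W' hW' s (Ico_subset_Icc_self hs))
    (by rw [hW.apply_zero, hW'.apply_zero]) t ht
  refine h.trans ?_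
  gcongr
  linarith [ht.2]

lemma unique (hW : SolvesCumulant B l W) (hW' : SolvesCumulant B l W') (ht : 0 ≤ t) :
    W t = W' t := by
  obtain ⟨K, hK⟩ := exists_dist_le B l t
  simpa using hK l le_rfl l le_rfl W W' hW hW' t (right_mem_Icc.2 ht)

lemma eq_zero (hW : SolvesCumulant B 0 W) (ht : 0 ≤ t) : W t = 0 := by
  obtain ⟨C, -, hbound⟩ := exists_fst_add_snd_le B
  have hsum := hbound 0 W hW t ht
  simp only [Prod.fst_zero, Prod.snd_zero, add_zero, zero_mul] at hsum
  obtain ⟨h₁, h₂⟩ := hW.2.1 t ht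
  exact Prod.ext (by linarith : (W t).1 = 0) (by linarith : (W t).2 = 0)

lemma comp_add_left (hW : SolvesCumulant B l W) (hs : 0 ≤ s) :
    SolvesCumulant B (W s) (fun t => W (s + t)) := by
  refine ⟨hW.1.comp (by fun_prop) fun t ht => add_nonneg hs ht,
    fun t ht => hW.2.1 _ (add_nonneg hs ht), fun t ht => ?_⟩
  obtain ⟨hs₁, hs₂⟩ := hW.2.2 s hs
  obtain ⟨hst₁, hst₂⟩ := hW.2.2 (s + t) (add_nonneg hs ht)
  obtain ⟨i₁, i₂⟩ := hW.intervalIntegrable_mPhi le_rfl hs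
  obtain ⟨j₁, j₂⟩ := hW.intervalIntegrable_mPhi hs (add_nonneg hs ht)
  rw [intervalIntegral.integral_comp_add_left (fun r => mPhi1 B (W r)),
    intervalIntegral.integral_comp_add_left (fun r => mPhi2 B (W r)), add_zero]
  constructor
  · rw [hst₁, hs₁, ← intervalIntegral.integral_add_adjacent_intervals i₁ j₁, add_assoc]
  · rw [hst₂, hs₂, ← intervalIntegral.integral_add_adjacent_intervals i₂ j₂, add_assoc]

end SolvesCumulant

/-- `V : (t, l) ↦ V(t, l)` is the cumulant semiflow on `[0,∞)²`: each `t ↦ V(t, l)` solves the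
cumulant equations with initial value `l`. -/
def IsCumulantFlow (B : BranchingMechanism) (V : ℝ → ℝ × ℝ → ℝ × ℝ) : Prop :=
  ∀ l : ℝ × ℝ, 0 ≤ l → SolvesCumulant B l (fun t => V t l)

namespace IsCumulantFlow

variable {B : BranchingMechanism} {V : ℝ → ℝ × ℝ → ℝ × ℝ} {s t : ℝ}

lemma apply_add (hV : IsCumulantFlow B V) (hs : 0 ≤ s) (ht : 0 ≤ t) {l : ℝ × ℝ} (hl : 0 ≤ l) :
    V t (V s l) = V (s + t) l :=
  (hV (V s l) ((hV l hl).2.1 s hs)).unique ((hV l hl).comp_add_left hs) ht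

lemma continuousOn (hV : IsCumulantFlow B V) (ht : 0 ≤ t) : ContinuousOn (V t) (Ici 0) := by
  intro l hl
  obtain ⟨K, hK⟩ := SolvesCumulant.exists_dist_le B (l + 1) t
  refine tendsto_iff_dist_tendsto_zero.2 (squeeze_zero' (.of_forall fun _ => dist_nonneg)
    (g := fun m => dist m l * K) ?_ ?_)
  · filter_upwards [self_mem_nhdsWithin, mem_nhdsWithin_of_mem_nhds (Iic_add_one_mem_nhds l)]
      with m hm hml
    exact hK m hml l (le_add_of_nonneg_right zero_le_one) _ _ (hV m hm) (hV l hl) t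
      (right_mem_Icc.2 ht)
  · have : Continuous fun m => dist m l * K := by fun_prop
    simpa using (this.tendsto l).mono_left nhdsWithin_le_nhds

end IsCumulantFlow

lemma deriv_mul_sub_nonneg_of_isMinOn {f : ℝ → ℝ} {f' a y : ℝ} {s : Set ℝ} (hmin : IsMinOn f s a)
    (hf : HasDerivWithinAt f f' s a) (hseg : segment ℝ a y ⊆ s) : 0 ≤ f' * (y - a) := by
  have h := hmin.localize.hasFDerivWithinAt_nonneg hf.hasFDerivWithinAt
    (sub_mem_posTangentConeAt_of_segment_subset hseg)
  simpa [mul_comm] using h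

lemma second_deriv_nonneg_of_isLocalMin {f f₁ : ℝ → ℝ} {f₂ a : ℝ} (hmin : IsLocalMin f a)
    (hf : ∀ s, HasDerivAt f (f₁ s) s) (hf₁ : HasDerivAt f₁ f₂ a) : 0 ≤ f₂ := by
  by_contra! hneg
  have deriv_f : deriv f = f₁ := funext fun s => (hf s).deriv
  have hmax : IsLocalMax f a := isLocalMax_of_deriv_deriv_neg
    (by rwa [deriv_f, hf₁.deriv]) hmin.deriv_eq_zero (hf a).continuousAt
  have locally_constant : f =ᶠ[𝓝 a] fun _ => f a := by
    filter_upwards [hmin, hmax] with s h₁ h₂ using le_antisymm h₂ h₁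
  have h := locally_constant.deriv.deriv.eq_of_nhds
  simp only [deriv_f, hf₁.deriv, deriv_const'] at h
  exact hneg.ne h

lemma add_mem_Mset {x z : ℝ × ℝ} (hx : x ∈ Mset) (hz : z ∈ Mset) : x + z ∈ Mset := by
  obtain ⟨hx₁, m, hm⟩ := hx
  obtain ⟨hz₁, n, hn⟩ := hz
  exact ⟨add_nonneg hx₁ hz₁, m + n, by simp [hm, hn]⟩

lemma add_mem_Mset_of_mem_Mm1set {x z : ℝ × ℝ} (hx : x ∈ Mset) (hx₂ : x.2 ≠ 0)
    (hz : z ∈ Mm1set) : x + z ∈ Mset := by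
  obtain ⟨hx₁, m, hm⟩ := hx
  obtain ⟨hz₁, n, hn, hzn⟩ := hz
  have hm₀ : m ≠ 0 := by rintro rfl; exact hx₂ (by simpa using hm)
  lift (m + n : ℤ) to ℕ using by lia with k hk
  exact ⟨add_nonneg hx₁ hz₁, k, by rw [Prod.snd_add, hm, hzn]; exact_mod_cast hk.symm⟩

/-- `HasGeneratorAt B f x a`: the generator
`x₁ (-a₁₁ ∂₁f(x) + α ∂₁²f(x) + ∫ (f(x + z) - f(x) - ∂₁f(x) z₁) n₁(dz))
  + x₂ (a₂₁ ∂₁f(x) + ∫ (f(x + z) - f(x)) n₂(dz))`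
of the mixed state branching process is well defined for `f` at `x` and has the value `a` there.
As for `HasDerivAt`, the existence of the derivatives and integrals is part of the assertion. -/
def HasGeneratorAt (B : BranchingMechanism) (f : ℝ × ℝ → ℝ) (x : ℝ × ℝ) (a : ℝ) : Prop :=
  ∃ (f₁ : ℝ → ℝ) (f₂ : ℝ), (∀ s, HasDerivAt (fun s => f (s, x.2)) (f₁ s) s) ∧
    HasDerivAt f₁ f₂ x.1 ∧
    Integrable (fun z => f (x + z) - f x - f₁ x.1 * z.1) B.n1 ∧
    Integrable (fun z => f (x + z) - f x) B.n2 ∧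
    a = x.1 * (-B.a11 * f₁ x.1 + B.alpha * f₂ + ∫ z, (f (x + z) - f x - f₁ x.1 * z.1) ∂B.n1) +
      x.2 * (B.a21 * f₁ x.1 + ∫ z, (f (x + z) - f x) ∂B.n2)

namespace HasGeneratorAt

variable {B : BranchingMechanism} {f g : ℝ × ℝ → ℝ} {x : ℝ × ℝ} {a b : ℝ}

lemma zero : HasGeneratorAt B (fun _ => 0) x 0 :=
  ⟨fun _ => 0, 0, fun s => hasDerivAt_const s 0, hasDerivAt_const _ 0, by simp, by simp, by simp⟩

lemma add (hf : HasGeneratorAt B f x a) (hg : HasGeneratorAt B g x b) :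
    HasGeneratorAt B (fun y => f y + g y) x (a + b) := by
  obtain ⟨f₁, f₂, hf₁, hf₂, hfn₁, hfn₂, rfl⟩ := hf
  obtain ⟨g₁, g₂, hg₁, hg₂, hgn₁, hgn₂, rfl⟩ := hg
  have split_n1 : ∀ z : ℝ × ℝ, f (x + z) + g (x + z) - (f x + g x) - (f₁ x.1 + g₁ x.1) * z.1 =
      (f (x + z) - f x - f₁ x.1 * z.1) + (g (x + z) - g x - g₁ x.1 * z.1) := fun z => by ring
  have split_n2 : ∀ z : ℝ × ℝ, f (x + z) + g (x + z) - (f x + g x) =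
      (f (x + z) - f x) + (g (x + z) - g x) := fun z => by ring
  refine ⟨fun s => f₁ s + g₁ s, f₂ + g₂, fun s => (hf₁ s).add (hg₁ s), hf₂.add hg₂, ?_, ?_, ?_⟩
  · simpa only [split_n1] using hfn₁.fun_add hgn₁
  · simpa only [split_n2] using hfn₂.fun_add hgn₂
  · simp only [split_n1, integral_add hfn₁ hgn₁]
    simp only [split_n2, integral_add hfn₂ hgn₂]
    ring

lemma const_mul (c : ℝ) (hf : HasGeneratorAt B f x a) :
    HasGeneratorAt B (fun y => c * f y) x (c * a) := by
  obtain ⟨f₁, f₂, hf₁, hf₂, hn₁, hn₂, rfl⟩ := hf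
  have factor_n1 : ∀ z : ℝ × ℝ, c * f (x + z) - c * f x - c * f₁ x.1 * z.1 =
      c * (f (x + z) - f x - f₁ x.1 * z.1) := fun z => by ring
  refine ⟨fun s => c * f₁ s, c * f₂, fun s => (hf₁ s).const_mul c, hf₂.const_mul c, ?_, ?_, ?_⟩
  · simpa only [factor_n1] using hn₁.const_mul c
  · simpa only [mul_sub] using hn₂.const_mul c
  · simp only [factor_n1, integral_const_mul]
    simp only [← mul_sub, integral_const_mul]
    ring

lemma sum {ι : Type*} (S : Finset ι) {f : ι → ℝ × ℝ → ℝ} {a : ι → ℝ}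
    (hf : ∀ i ∈ S, HasGeneratorAt B (f i) x (a i)) :
    HasGeneratorAt B (fun y => ∑ i ∈ S, f i y) x (∑ i ∈ S, a i) := by
  induction S using Finset.cons_induction with
  | empty => simpa using zero
  | cons i S hi ih =>
    simp only [Finset.sum_cons]
    exact (hf i (Finset.mem_cons_self i S)).add
      (ih fun j hj => hf j (Finset.mem_cons_of_mem hj))

lemma nonneg_of_isMinOn (hf : HasGeneratorAt B f x a) (hx : x ∈ Mset)
    (hmin : IsMinOn f Mset x) : 0 ≤ a := by
  obtain ⟨f₁, f₂, hf₁, hf₂, -, -, rfl⟩ := hf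
  have hx₀ := Mset_nonneg hx
  have section_min : IsMinOn (fun s => f (s, x.2)) (Ici 0) x.1 := fun s hs => hmin ⟨hs, hx.2⟩
  have first_nonneg : 0 ≤ f₁ x.1 := by
    simpa using deriv_mul_sub_nonneg_of_isMinOn section_min (hf₁ x.1).hasDerivWithinAt
      ((convex_Ici 0).segment_subset hx₀.1 (add_nonneg hx₀.1 zero_le_one : 0 ≤ x.1 + 1))
  refine add_nonneg ?_ ?_
  · rcases hx₀.1.eq_or_lt with h | hpos
    · simp only [Prod.fst_zero] at h
      simp [← h]
    have local_min := section_min.isLocalMin (Ici_mem_nhds hpos)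
    have first_zero : f₁ x.1 = 0 := local_min.hasDerivAt_eq_zero (hf₁ x.1)
    have second_nonneg := second_deriv_nonneg_of_isLocalMin local_min hf₁ hf₂
    simp only [first_zero, mul_zero, zero_mul, sub_zero, zero_add]
    refine mul_nonneg hx₀.1 (add_nonneg (mul_nonneg B.alpha_nonneg second_nonneg) ?_)
    refine integral_nonneg_of_ae (B.ae_mem_Mset.mono fun z hz => ?_)
    exact sub_nonneg.2 (hmin (add_mem_Mset hx hz))
  · rcases eq_or_ne x.2 0 with h | hne
    · simp [h]
    refine mul_nonneg hx₀.2 (add_nonneg (mul_nonneg B.a21_nonneg first_nonneg) ?_)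
    refine integral_nonneg_of_ae (B.ae_mem_Mm1set.mono fun z hz => ?_)
    exact sub_nonneg.2 (hmin (add_mem_Mset_of_mem_Mm1set hx hne hz))

end HasGeneratorAt

lemma BranchingMechanism.hasGeneratorAt_laplaceKernel (B : BranchingMechanism) {l : ℝ × ℝ}
    (hl : 0 ≤ l) (x : ℝ × ℝ) :
    HasGeneratorAt B (laplaceKernel l) x
      (-(x.1 * mPhi1 B l + x.2 * mPhi2 B l) * laplaceKernel l x) := by
  have deriv_kernel : ∀ s, HasDerivAt (fun s => laplaceKernel l (s, x.2))
      (-l.1 * laplaceKernel l (s, x.2)) s := fun s => by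
    have h := (((hasDerivAt_id s).const_mul l.1).add_const (l.2 * x.2)).neg.exp
    exact h.congr_deriv (by rw [mul_one, mul_comm]; rfl)
  have jump_n1 : ∀ z : ℝ × ℝ, laplaceKernel l (x + z) - laplaceKernel l x -
      -l.1 * laplaceKernel l x * z.1 =
      laplaceKernel l x * (laplaceKernel l z - 1 + l.1 * z.1) := fun z => by
    rw [laplaceKernel_add_right]; ring
  have jump_n2 : ∀ z : ℝ × ℝ, laplaceKernel l (x + z) - laplaceKernel l x =
      laplaceKernel l x * (laplaceKernel l z - 1) := fun z => by
    rw [laplaceKernel_add_right]; ring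
  refine ⟨_, _, deriv_kernel, (deriv_kernel x.1).const_mul (-l.1), ?_, ?_, ?_⟩
  · simpa only [jump_n1] using (B.integrable_compensated_kernel hl).const_mul _
  · simpa only [jump_n2] using (B.integrable_laplaceKernel_sub_one hl).const_mul _
  · simp only [jump_n1, integral_const_mul, mPhi1_eq]
    simp only [jump_n2, integral_const_mul, mPhi2_eq]
    ring

lemma BranchingMechanism.exists_hasGeneratorAt_one_add_fst_add_snd (B : BranchingMechanism) :
    ∃ C, 0 ≤ C ∧ ∀ x ∈ Mset, ∃ a ≤ C * (x.1 + x.2),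
      HasGeneratorAt B (fun y => 1 + y.1 + y.2) x a := by
  have jump_n1 : ∀ x z : ℝ × ℝ, 1 + (x + z).1 + (x + z).2 - (1 + x.1 + x.2) - 1 * z.1 = z.2 :=
    fun x z => by simp only [Prod.fst_add, Prod.snd_add]; ring
  have jump_n2 : ∀ x z : ℝ × ℝ, 1 + (x + z).1 + (x + z).2 - (1 + x.1 + x.2) = z.1 + z.2 :=
    fun x z => by simp only [Prod.fst_add, Prod.snd_add]; ring
  have integrable_n1 : Integrable (fun z => z.2) B.n1 := by
    refine B.integrable_min_add_snd.mono' (by fun_prop) (B.ae_mem_Mset.mono fun z hz => ?_)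
    rw [Real.norm_of_nonneg (Mset_nonneg hz).2]
    exact le_add_of_nonneg_left (le_min hz.1 (sq_nonneg _))
  have integrable_n2 : Integrable (fun z => z.1 + z.2) B.n2 := by
    refine B.integrable_fst_add_abs_snd.mono' (by fun_prop) (B.ae_mem_Mm1set.mono fun z hz => ?_)
    simpa only [Real.norm_eq_abs, abs_of_nonneg hz.1] using abs_add_le z.1 z.2
  set c₁ := -B.a11 + ∫ z, z.2 ∂B.n1 with hc₁
  set c₂ := B.a21 + ∫ z, (z.1 + z.2) ∂B.n2 with hc₂
  refine ⟨|c₁| + |c₂|, by positivity, fun x hx => ⟨x.1 * c₁ + x.2 * c₂, ?_, fun _ => 1, 0, ?_,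
    hasDerivAt_const _ 1, ?_, ?_, ?_⟩⟩
  · have hx₁ : 0 ≤ x.1 := hx.1
    have hx₂ : 0 ≤ x.2 := (Mset_nonneg hx).2
    nlinarith [mul_le_mul_of_nonneg_left (le_abs_self c₁) hx₁,
      mul_le_mul_of_nonneg_left (le_abs_self c₂) hx₂, mul_nonneg hx₁ (abs_nonneg c₂),
      mul_nonneg hx₂ (abs_nonneg c₁)]
  · exact fun s => ((hasDerivAt_id s).const_add 1).add_const x.2
  · simpa only [jump_n1] using integrable_n1
  · simpa only [jump_n2] using integrable_n2
  · simp only [jump_n1, hc₁, mul_one, mul_zero, add_zero]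
    simp only [jump_n2, hc₂]

lemma isClosed_Mset : IsClosed Mset := by
  have h : Mset = Ici 0 ×ˢ range ((↑) : ℕ → ℝ) := by
    ext z
    simp [Mset, eq_comm]
  exact h ▸ isClosed_Ici.prod Nat.isClosedEmbedding_coe_real.isClosed_range

lemma isCompact_Mset_inter_sublevel (R : ℝ) : IsCompact (Mset ∩ {y | y.1 + y.2 ≤ R}) := by
  refine (isCompact_Icc (a := (0 : ℝ × ℝ)) (b := (R, R))).of_isClosed_subset
    (isClosed_Mset.inter (isClosed_le (by fun_prop) continuous_const)) fun y hy => ?_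
  obtain ⟨h₁, h₂⟩ := Mset_nonneg hy.1
  have hsum : y.1 + y.2 ≤ R := hy.2
  simp only [Prod.fst_zero, Prod.snd_zero] at h₁ h₂
  exact ⟨⟨h₁, h₂⟩, by simp only; linarith, by simp only; linarith⟩

lemma exists_isMinOn_Icc_prod_Mset {w : ℝ × ℝ × ℝ → ℝ} {T c ε : ℝ} (hT : 0 ≤ T) (hε : 0 < ε)
    (hw : ContinuousOn w (Icc 0 T ×ˢ Mset))
    (hcoercive : ∀ p ∈ Icc 0 T ×ˢ Mset, c + ε * (p.2.1 + p.2.2) ≤ w p) :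
    ∃ p ∈ Icc 0 T ×ˢ Mset, IsMinOn w (Icc 0 T ×ˢ Mset) p := by
  have origin_mem : (0 : ℝ × ℝ × ℝ) ∈ Icc 0 T ×ˢ Mset :=
    ⟨left_mem_Icc.2 hT, le_rfl, 0, Nat.cast_zero.symm⟩
  refine hw.exists_isMinOn' (isClosed_Icc.prod isClosed_Mset) origin_mem ?_
  have hcompact := isCompact_Icc (a := (0 : ℝ)) (b := T) |>.prod
    (isCompact_Mset_inter_sublevel ((w 0 - c) / ε))
  filter_upwards [mem_inf_of_left hcompact.compl_mem_cocompact,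
    mem_inf_of_right (mem_principal_self _)] with p hp hpmem
  have hlarge : (w 0 - c) / ε < p.2.1 + p.2.2 := by
    by_contra! hle
    exact hp ⟨hpmem.1, hpmem.2, hle⟩
  rw [div_lt_iff₀' hε] at hlarge
  linarith [hcoercive p hpmem]

section MinimumPrinciple

variable {B : BranchingMechanism} {T c : ℝ}

lemma nonneg_of_strict_supersolution {w : ℝ → ℝ × ℝ → ℝ} {ε : ℝ} (hε : 0 < ε)
    (hcont : ContinuousOn (fun p : ℝ × ℝ × ℝ => w p.1 p.2) (Icc 0 T ×ˢ Mset))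
    (hcoercive : ∀ t ∈ Icc 0 T, ∀ x ∈ Mset, c + ε * (x.1 + x.2) ≤ w t x)
    (hinit : ∀ x ∈ Mset, 0 ≤ w 0 x)
    (hsuper : ∀ t ∈ Ioc 0 T, ∀ x ∈ Mset, ∃ a d, a < d ∧ HasGeneratorAt B (w t) x a ∧
      HasDerivWithinAt (fun s => w s x) d (Icc 0 t) t)
    {t : ℝ} (ht : t ∈ Icc 0 T) {x : ℝ × ℝ} (hx : x ∈ Mset) : 0 ≤ w t x := by
  obtain ⟨⟨s, y⟩, ⟨hs, hy⟩, hmin⟩ := exists_isMinOn_Icc_prod_Mset (ht.1.trans ht.2) hε hcont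
    fun p hp => hcoercive p.1 hp.1 p.2 hp.2
  refine le_trans ?_ (hmin (⟨ht, hx⟩ : (t, x) ∈ Icc 0 T ×ˢ Mset))
  rcases hs.1.eq_or_lt with rfl | hpos
  · exact hinit y hy
  obtain ⟨a, d, had, hgen, htime⟩ := hsuper s ⟨hpos, hs.2⟩ y hy
  have space_min : ∀ z ∈ Mset, w s y ≤ w s z := fun z hz =>
    hmin (show (s, z) ∈ Icc 0 T ×ˢ Mset from ⟨hs, hz⟩)
  have time_min : IsMinOn (fun r => w r y) (Icc 0 s) s := fun r hr =>
    hmin (show (r, y) ∈ Icc 0 T ×ˢ Mset from ⟨⟨hr.1, hr.2.trans hs.2⟩, hy⟩)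
  have generator_nonneg : 0 ≤ a := hgen.nonneg_of_isMinOn hy space_min
  have time_derivative_nonpos : 0 ≤ d * (0 - s) := deriv_mul_sub_nonneg_of_isMinOn time_min htime
    ((convex_Icc 0 s).segment_subset (right_mem_Icc.2 hs.1) (left_mem_Icc.2 hs.1))
  nlinarith

lemma nonneg_of_kolmogorov_backward {u : ℝ → ℝ × ℝ → ℝ}
    (hcont : ContinuousOn (fun p : ℝ × ℝ × ℝ => u p.1 p.2) (Icc 0 T ×ˢ Mset))
    (hbdd : ∀ t ∈ Icc 0 T, ∀ x ∈ Mset, c ≤ u t x) (hinit : ∀ x ∈ Mset, 0 ≤ u 0 x)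
    (hsol : ∀ t ∈ Ioc 0 T, ∀ x ∈ Mset, ∃ a, HasGeneratorAt B (u t) x a ∧
      HasDerivWithinAt (fun s => u s x) a (Icc 0 t) t)
    {t : ℝ} (ht : t ∈ Icc 0 T) {x : ℝ × ℝ} (hx : x ∈ Mset) : 0 ≤ u t x := by
  obtain ⟨C, hC, hpenalty⟩ := B.exists_hasGeneratorAt_one_add_fst_add_snd
  have weight_nonneg : ∀ y ∈ Mset, 0 ≤ y.1 + y.2 := fun y hy => add_nonneg hy.1 (Mset_nonneg hy).2
  -- The penalty makes the supersolution strict and coercive.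
  have perturbed_nonneg : ∀ ε, 0 < ε →
      0 ≤ u t x + ε * Real.exp ((C + 1) * t) * (1 + x.1 + x.2) := by
    intro ε hε
    refine nonneg_of_strict_supersolution (B := B) (c := c) (T := T) hε
      (w := fun t x => u t x + ε * Real.exp ((C + 1) * t) * (1 + x.1 + x.2))
      (hcont.add (by fun_prop)) (fun s hs y hy => ?_) (fun y hy => ?_) (fun s hs y hy => ?_) ht hx
    · have hexp : ε ≤ ε * Real.exp ((C + 1) * s) :=
        le_mul_of_one_le_right hε.le (Real.one_le_exp (mul_nonneg (by linarith) hs.1))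
      nlinarith [hbdd s hs y hy, weight_nonneg y hy]
    · exact add_nonneg (hinit y hy) (mul_nonneg (by positivity) (by linarith [weight_nonneg y hy]))
    · obtain ⟨a, hgen, htime⟩ := hsol s hs y hy
      obtain ⟨b, hb, hpen⟩ := hpenalty y hy
      have hexp := (((hasDerivAt_id s).const_mul (C + 1)).exp.const_mul ε).mul_const
        (1 + y.1 + y.2)
      refine ⟨_, _, ?_, hgen.add (hpen.const_mul _), htime.add hexp.hasDerivWithinAt⟩
      have hstrict : b < (C + 1) * (1 + y.1 + y.2) := by linarith [weight_nonneg y hy]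
      have := mul_lt_mul_of_pos_left hstrict (mul_pos hε (Real.exp_pos ((C + 1) * s)))
      simp only [id, mul_one]
      linarith
  have hK : 0 < Real.exp ((C + 1) * t) * (1 + x.1 + x.2) :=
    mul_pos (Real.exp_pos _) (by linarith [weight_nonneg x hx])
  refine le_of_forall_pos_le_add fun δ hδ => ?_
  have h := perturbed_nonneg _ (div_pos hδ hK)
  rwa [mul_assoc, div_mul_cancel₀ _ hK.ne'] at h

end MinimumPrinciple

namespace SolvesCumulant

variable {B : BranchingMechanism}

lemma hasDerivWithinAt_laplaceKernel {l : ℝ × ℝ} {W : ℝ → ℝ × ℝ} (hW : SolvesCumulant B l W)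
    {t : ℝ} (ht : 0 ≤ t) (x : ℝ × ℝ) :
    HasDerivWithinAt (fun s => laplaceKernel (W s) x)
      (-(x.1 * mPhi1 B (W t) + x.2 * mPhi2 B (W t)) * laplaceKernel (W t) x) (Ici 0) t := by
  refine ((hasFDerivAt_laplaceKernel (W t) x).comp_hasDerivWithinAt t
    (hW.hasDerivWithinAt ht)).congr_deriv ?_
  simp [BranchingMechanism.Phi]
  ring

lemma sum_laplaceKernel_nonneg {ι : Type*} {S : Finset ι} {c : ι → ℝ} {l : ι → ℝ × ℝ}
    {W : ι → ℝ → ℝ × ℝ} (hW : ∀ i ∈ S, SolvesCumulant B (l i) (W i))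
    (hinit : ∀ x ∈ Mset, 0 ≤ ∑ i ∈ S, c i * laplaceKernel (l i) x)
    {t : ℝ} (ht : 0 ≤ t) {x : ℝ × ℝ} (hx : x ∈ Mset) :
    0 ≤ ∑ i ∈ S, c i * laplaceKernel (W i t) x := by
  refine nonneg_of_kolmogorov_backward (B := B) (c := -∑ i ∈ S, |c i|)
    (u := fun t x => ∑ i ∈ S, c i * laplaceKernel (W i t) x) ?_ (fun s hs y hy => ?_)
    (fun y hy => ?_) (fun s hs y _ => ?_) (right_mem_Icc.2 ht) hx
  · refine continuousOn_finsetSum _ fun i hi => continuousOn_const.mul ?_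
    have hcont : ContinuousOn (fun p : ℝ × ℝ × ℝ => W i p.1) (Icc 0 t ×ˢ Mset) :=
      (hW i hi).1.comp continuousOn_fst fun p hp => hp.1.1
    exact ((hcont.fst.mul (by fun_prop)).add (hcont.snd.mul (by fun_prop))).neg.rexp
  · rw [← Finset.sum_neg_distrib]
    refine Finset.sum_le_sum fun i hi => ?_
    have hle := laplaceKernel_le_one ((hW i hi).2.1 s hs.1) (Mset_nonneg hy)
    have hpos := laplaceKernel_pos (W i s) y
    nlinarith [neg_abs_le (c i), abs_nonneg (c i)]
  · rw [Finset.sum_congr rfl fun i hi => by rw [(hW i hi).apply_zero]]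
    exact hinit y hy
  · refine ⟨_, HasGeneratorAt.sum S fun i hi =>
      (B.hasGeneratorAt_laplaceKernel ((hW i hi).2.1 s hs.1.le) y).const_mul (c i), ?_⟩
    exact HasDerivWithinAt.fun_sum fun i hi =>
      (((hW i hi).hasDerivWithinAt_laplaceKernel hs.1.le y).mono Icc_subset_Ici_self).const_mul _

end SolvesCumulant

/-- `f` is a positive functional of the Laplace kernels on `E`: finite combinations
`∑ c_l e^{-⟨l, ·⟩}`, `l ∈ [0,∞)²`, that are nonnegative on `E` have `∑ c_l f(l) ≥ 0`. -/
def LaplacePositive (E : Set (ℝ × ℝ)) (f : ℝ × ℝ → ℝ) : Prop :=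
  ∀ a : Ici (0 : ℝ × ℝ) →₀ ℝ, (∀ y ∈ E, 0 ≤ a.sum fun l c => c * laplaceKernel l y) →
    0 ≤ a.sum fun l c => c * f l

lemma IsCumulantFlow.laplacePositive {B : BranchingMechanism} {V : ℝ → ℝ × ℝ → ℝ × ℝ}
    (hV : IsCumulantFlow B V) {t : ℝ} (ht : 0 ≤ t) {x : ℝ × ℝ} (hx : x ∈ Mset) :
    LaplacePositive Mset (fun l => laplaceKernel x (V t l)) := fun a ha => by
  simp only [laplaceKernel_comm x]
  exact SolvesCumulant.sum_laplaceKernel_nonneg (l := fun l : Ici (0 : ℝ × ℝ) => (l : ℝ × ℝ))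
    (W := fun l t => V t l) (fun l _ => hV l l.2) ha ht hx

section PositiveExtension

variable {W V : Type*} [AddCommGroup W] [Module ℝ W] [AddCommGroup V] [PartialOrder V]
  [IsOrderedAddMonoid V] [Module ℝ V] [PosSMulMono ℝ V]

lemma exists_positiveLinearMap_apply_eq (E : W →ₗ[ℝ] V) (F : W →ₗ[ℝ] ℝ)
    (hpos : ∀ a, 0 ≤ E a → 0 ≤ F a) (hcofinal : ∀ v, ∃ a, 0 ≤ E a + v) :
    ∃ G : V →ₚ[ℝ] ℝ, ∀ a, G (E a) = F a := by
  obtain ⟨s, hs⟩ := E.rangeRestrict.exists_rightInverse_of_surjective E.range_rangeRestrict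
  have E_section : ∀ v, E (s v) = v := fun v => congrArg Subtype.val (LinearMap.congr_fun hs v)
  have ker_le : ∀ a, E a = 0 → F a = 0 := fun a ha =>
    le_antisymm (by simpa using hpos (-a) (by simp [ha])) (hpos a ha.ge)
  obtain ⟨G, hext, hG⟩ := riesz_extension (PointedCone.positive ℝ V)
    ⟨LinearMap.range E, F ∘ₗ s⟩ (fun v hv => hpos (s v) (by rwa [E_section]))
    (fun v => (hcofinal v).imp' (fun a => ⟨E a, a, rfl⟩) fun _ ha => ha)
  refine ⟨PositiveLinearMap.mk₀ G hG, fun a => (hext ⟨E a, a, rfl⟩).trans ?_⟩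
  have hdiff := ker_le (s ⟨E a, a, rfl⟩ - a) (by rw [map_sub, E_section, sub_self])
  rwa [map_sub, sub_eq_zero] at hdiff

end PositiveExtension

section RieszMarkov

variable {X : Type*} [TopologicalSpace X]

instance posSMulMono_boundedContinuousFunction : PosSMulMono ℝ (X →ᵇ ℝ) where
  smul_le_smul_of_nonneg_left _ hc _ _ hfg x := mul_le_mul_of_nonneg_left (hfg x) hc

lemma hasCompactSupport_max_sub [R1Space X] {h : X → ℝ}
    (hzero : Tendsto h (cocompact X) (𝓝 0)) {ε : ℝ} (hε : 0 < ε) :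
    HasCompactSupport fun x => max (h x - ε) 0 := by
  rw [hasCompactSupport_iff_eventuallyEq, coclosedCompact_eq_cocompact]
  filter_upwards [hzero.eventually (gt_mem_nhds hε)] with x hx
  exact max_eq_right (sub_nonpos.2 hx.le)

/-- The restriction of a positive functional on bounded continuous functions to continuous
functions with compact support, the input of the Riesz–Markov–Kakutani theorem. -/
def restrictCompactlySupported (G : (X →ᵇ ℝ) →ₚ[ℝ] ℝ) : C_c(X, ℝ) →ₚ[ℝ] ℝ :=
  PositiveLinearMap.mk₀
    { toFun := fun h => G (ofCompactSupport h h.continuous h.hasCompactSupport)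
      map_add' := fun h k => by rw [← map_add]; rfl
      map_smul' := fun r h => by rw [← map_smul]; rfl }
    fun h hh => map_nonneg G hh

lemma lintegral_rieszMeasure_of_tendsto_zero [T2Space X] [LocallyCompactSpace X]
    [MeasurableSpace X] [BorelSpace X] (G : (X →ᵇ ℝ) →ₚ[ℝ] ℝ) {h : X →ᵇ ℝ} (hh : 0 ≤ h)
    (hzero : Tendsto h (cocompact X) (𝓝 0)) :
    ∫⁻ x, ENNReal.ofReal (h x) ∂(RealRMK.rieszMeasure (restrictCompactlySupported G)) =
      ENNReal.ofReal (G h) := by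
  set Λ := restrictCompactlySupported G
  have ε_pos : ∀ n : ℕ, (0 : ℝ) < 1 / (n + 1) := fun n => Nat.one_div_pos_of_nat
  have ε_tendsto := tendsto_one_div_add_atTop_nhds_zero_nat (𝕜 := ℝ)
  let trunc (n : ℕ) : C_c(X, ℝ) := ⟨⟨fun x => max (h x - 1 / (n + 1)) 0, by fun_prop⟩,
    hasCompactSupport_max_sub hzero (ε_pos n)⟩
  have Λ_trunc_le : ∀ n, Λ (trunc n) ≤ G h := fun n =>
    OrderHomClass.mono G fun x => max_le (sub_le_self _ (ε_pos n).le) (hh x)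
  have le_Λ_trunc : ∀ n : ℕ, G h - 1 / (n + 1) * G 1 ≤ Λ (trunc n) := fun n => by
    rw [← smul_eq_mul, ← map_smul, ← map_sub]
    refine OrderHomClass.mono G fun x => ?_
    change h x - 1 / (n + 1) * 1 ≤ max (h x - 1 / (n + 1)) 0
    rw [mul_one]
    exact le_max_left _ _
  have Λ_tendsto : Tendsto (fun n => Λ (trunc n)) atTop (𝓝 (G h)) :=
    tendsto_of_tendsto_of_tendsto_of_le_of_le
      (by simpa using tendsto_const_nhds.sub (ε_tendsto.mul_const (G 1)))
      tendsto_const_nhds le_Λ_trunc Λ_trunc_le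
  have lintegral_trunc : ∀ n, ∫⁻ x, ENNReal.ofReal (trunc n x) ∂(RealRMK.rieszMeasure Λ) =
      ENNReal.ofReal (Λ (trunc n)) := fun n => by
    rw [← RealRMK.integral_rieszMeasure, ofReal_integral_eq_lintegral_ofReal]
    · exact (trunc n).continuous.integrable_of_hasCompactSupport (trunc n).hasCompactSupport
    · exact Eventually.of_forall fun x => le_max_right _ _
  refine tendsto_nhds_unique (lintegral_tendsto_of_tendsto_of_monotone
    (fun n => (trunc n).continuous.measurable.ennreal_ofReal.aemeasurable)
    (.of_forall fun x m n hmn => ?_) (.of_forall fun x => ?_))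
    (((ENNReal.continuous_ofReal.tendsto _).comp Λ_tendsto).congr fun n => (lintegral_trunc n).symm)
  · exact ENNReal.ofReal_le_ofReal (max_le_max_right 0
      (sub_le_sub_left (Nat.one_div_le_one_div hmn) _))
  · refine (ENNReal.continuous_ofReal.tendsto _).comp ?_
    have hlim := (ε_tendsto.const_sub (h x)).max (tendsto_const_nhds (x := (0 : ℝ)))
    rw [sub_zero, max_eq_left (show 0 ≤ h x from hh x)] at hlim
    exact hlim

end RieszMarkov

lemma continuous_laplaceKernel_left (z : ℝ × ℝ) : Continuous fun l => laplaceKernel l z := by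
  simp only [laplaceKernel_comm _ z]
  exact continuous_laplaceKernel z

lemma laplaceKernel_anti_left {l m z : ℝ × ℝ} (hlm : l ≤ m) (hz : 0 ≤ z) :
    laplaceKernel m z ≤ laplaceKernel l z := by
  rw [← add_sub_cancel l m, laplaceKernel_add_left]
  exact mul_le_of_le_one_right (laplaceKernel_pos l z).le
    (laplaceKernel_le_one (sub_nonneg.2 hlm) hz)

section LaplaceRepresentation

variable {E : Set (ℝ × ℝ)} {f : ℝ × ℝ → ℝ}

lemma tendsto_laplaceKernel_cocompact (hclosed : IsClosed E) (hE : E ⊆ Ici 0) {l : ℝ × ℝ}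
    (hl₁ : 0 < l.1) (hl₂ : 0 < l.2) :
    Tendsto (fun y : E => laplaceKernel l y) (cocompact E) (𝓝 0) := by
  have norm_tendsto : Tendsto (fun y : E => ‖(y : ℝ × ℝ)‖) (cocompact E) atTop :=
    tendsto_norm_cocompact_atTop.comp hclosed.isClosedEmbedding_subtypeVal.tendsto_cocompact
  refine squeeze_zero (fun y => (laplaceKernel_pos l y).le) (fun y => ?_)
    (Real.tendsto_exp_neg_atTop_nhds_zero.comp
      (norm_tendsto.const_mul_atTop (lt_min hl₁ hl₂)))
  obtain ⟨hy₁, hy₂⟩ := hE y.2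
  have norm_le : ‖(y : ℝ × ℝ)‖ ≤ (y : ℝ × ℝ).1 + (y : ℝ × ℝ).2 := by
    rw [Prod.norm_def, Real.norm_of_nonneg hy₁, Real.norm_of_nonneg hy₂]
    exact max_le_add_of_nonneg hy₁ hy₂
  refine Real.exp_le_exp.2 (neg_le_neg ?_)
  calc min l.1 l.2 * ‖(y : ℝ × ℝ)‖ ≤ min l.1 l.2 * ((y : ℝ × ℝ).1 + (y : ℝ × ℝ).2) :=
        mul_le_mul_of_nonneg_left norm_le (lt_min hl₁ hl₂).le
    _ ≤ l.1 * (y : ℝ × ℝ).1 + l.2 * (y : ℝ × ℝ).2 := by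
        rw [mul_add]
        exact add_le_add (mul_le_mul_of_nonneg_right (min_le_left _ _) hy₁)
          (mul_le_mul_of_nonneg_right (min_le_right _ _) hy₂)

/-- The Laplace kernel `e^{-⟨l, ·⟩}`, `l ∈ [0,∞)²`, as a bounded continuous function on a set
`E ⊆ [0,∞)²`. -/
def laplaceKernelBCF (hE : E ⊆ Ici 0) (l : Ici (0 : ℝ × ℝ)) : E →ᵇ ℝ :=
  .ofNormedAddCommGroup (fun y => laplaceKernel l y) (by fun_prop) 1 fun y => by
    rw [Real.norm_of_nonneg (laplaceKernel_pos _ _).le]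
    exact laplaceKernel_le_one l.2 (hE y.2)

namespace LaplacePositive

lemma nonneg (hf : LaplacePositive E f) {l : ℝ × ℝ} (hl : 0 ≤ l) : 0 ≤ f l := by
  simpa using hf (.single ⟨l, hl⟩ 1) fun y _ => by simpa using (laplaceKernel_pos l y).le

lemma exists_positiveLinearMap (hf : LaplacePositive E f) (hE : E ⊆ Ici 0) :
    ∃ G : (E →ᵇ ℝ) →ₚ[ℝ] ℝ, ∀ l, G (laplaceKernelBCF hE l) = f l := by
  refine (exists_positiveLinearMap_apply_eq
    (Finsupp.linearCombination ℝ (laplaceKernelBCF hE))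
    (Finsupp.linearCombination ℝ fun l : Ici (0 : ℝ × ℝ) => f l)
    (fun a ha => ?_) (fun v => ?_)).imp fun G hG l => by simpa using hG (.single l 1)
  · have eval_eq : ∀ y, Finsupp.linearCombination ℝ (laplaceKernelBCF hE) a y =
        a.sum fun l c => c * laplaceKernel l y := fun y => by
      rw [Finsupp.linearCombination_apply, Finsupp.sum, BoundedContinuousFunction.sum_apply]
      rfl
    exact hf a fun y hy => (ha ⟨y, hy⟩).trans_eq (eval_eq ⟨y, hy⟩)
  · refine ⟨.single ⟨0, self_mem_Ici⟩ ‖v‖, fun y => ?_⟩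
    have hy : 0 ≤ ‖v‖ * laplaceKernel 0 y + v y := by
      rw [laplaceKernel_zero_left, mul_one]
      linarith [neg_le_of_abs_le (v.norm_coe_le_norm y)]
    rw [Finsupp.linearCombination_single]
    exact hy

lemma exists_measure (hf : LaplacePositive E f) (hclosed : IsClosed E) (hE : E ⊆ Ici 0) :
    ∃ μ : Measure (ℝ × ℝ), μ Eᶜ = 0 ∧ ∀ l : ℝ × ℝ, 0 < l.1 → 0 < l.2 →
      ∫⁻ y, ENNReal.ofReal (laplaceKernel l y) ∂μ = ENNReal.ofReal (f l) := by
  have : LocallyCompactSpace E := hclosed.isClosedEmbedding_subtypeVal.locallyCompactSpace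
  obtain ⟨G, hG⟩ := hf.exists_positiveLinearMap hE
  have embedding := MeasurableEmbedding.subtype_coe hclosed.measurableSet
  refine ⟨(RealRMK.rieszMeasure (restrictCompactlySupported G)).map Subtype.val, ?_,
    fun l hl₁ hl₂ => ?_⟩
  · rw [embedding.map_apply]
    simp
  · rw [embedding.lintegral_map, ← hG ⟨l, hl₁.le, hl₂.le⟩]
    exact lintegral_rieszMeasure_of_tendsto_zero G (h := laplaceKernelBCF hE ⟨l, hl₁.le, hl₂.le⟩)
      (fun y => (laplaceKernel_pos l y).le)
      (tendsto_laplaceKernel_cocompact hclosed hE hl₁ hl₂)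

end LaplacePositive

lemma lintegral_laplaceKernel_of_continuousOn {μ : Measure (ℝ × ℝ)} (hμ : ∀ᵐ y ∂μ, 0 ≤ y)
    (hcont : ContinuousOn f (Ici 0))
    (hf : ∀ l : ℝ × ℝ, 0 < l.1 → 0 < l.2 →
      ∫⁻ y, ENNReal.ofReal (laplaceKernel l y) ∂μ = ENNReal.ofReal (f l))
    {l : ℝ × ℝ} (hl : 0 ≤ l) :
    ∫⁻ y, ENNReal.ofReal (laplaceKernel l y) ∂μ = ENNReal.ofReal (f l) := by
  let shift (n : ℕ) : ℝ × ℝ := l + (1 / ((n : ℝ) + 1), 1 / ((n : ℝ) + 1))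
  have ε_pos : ∀ n : ℕ, (0 : ℝ) < 1 / (n + 1) := fun n => Nat.one_div_pos_of_nat
  have shift_tendsto : Tendsto shift atTop (𝓝 l) := by
    have ε_tendsto := tendsto_one_div_add_atTop_nhds_zero_nat (𝕜 := ℝ)
    have h := (ε_tendsto.prodMk_nhds ε_tendsto).const_add l
    rwa [Prod.mk_zero_zero, add_zero] at h
  have f_tendsto : Tendsto (fun n => f (shift n)) atTop (𝓝 (f l)) :=
    (hcont l hl).tendsto.comp (tendsto_nhdsWithin_iff.2 ⟨shift_tendsto, .of_forall fun n =>
      add_nonneg hl ⟨(ε_pos n).le, (ε_pos n).le⟩⟩)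
  refine tendsto_nhds_unique (lintegral_tendsto_of_tendsto_of_monotone
    (fun n => (continuous_laplaceKernel (shift n)).measurable.ennreal_ofReal.aemeasurable)
    ?_ ?_)
    (((ENNReal.continuous_ofReal.tendsto _).comp f_tendsto).congr fun n =>
      (hf _ (add_pos_of_nonneg_of_pos hl.1 (ε_pos n))
        (add_pos_of_nonneg_of_pos hl.2 (ε_pos n))).symm)
  · filter_upwards [hμ] with y hy m n hmn
    exact ENNReal.ofReal_le_ofReal (laplaceKernel_anti_left (add_le_add_right
      (Prod.mk_le_mk.2 ⟨Nat.one_div_le_one_div hmn, Nat.one_div_le_one_div hmn⟩) l) hy)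
  · exact .of_forall fun y => ((ENNReal.continuous_ofReal.comp
      (continuous_laplaceKernel_left y)).tendsto l).comp shift_tendsto

/-- `μ` is a probability measure concentrated on `E` whose Laplace transform on `[0,∞)²` is `f`. -/
structure HasLaplaceTransform (μ : Measure (ℝ × ℝ)) (E : Set (ℝ × ℝ)) (f : ℝ × ℝ → ℝ) : Prop where
  isProbabilityMeasure : IsProbabilityMeasure μ
  measure_compl : μ Eᶜ = 0
  integral_laplaceKernel : ∀ l, 0 ≤ l → ∫ y, laplaceKernel l y ∂μ = f l

theorem LaplacePositive.exists_hasLaplaceTransform (hf : LaplacePositive E f)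
    (hclosed : IsClosed E) (hE : E ⊆ Ici 0) (hcont : ContinuousOn f (Ici 0)) (hzero : f 0 = 1) :
    ∃ μ, HasLaplaceTransform μ E f := by
  obtain ⟨μ, hμ, hpos⟩ := hf.exists_measure hclosed hE
  have lintegral_eq : ∀ l, 0 ≤ l → ∫⁻ y, ENNReal.ofReal (laplaceKernel l y) ∂μ =
      ENNReal.ofReal (f l) := fun l => lintegral_laplaceKernel_of_continuousOn
    (measure_mono_null (compl_subset_compl.2 hE) hμ) hcont hpos
  refine ⟨μ, ⟨?_⟩, hμ, fun l hl => ?_⟩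
  · simpa [laplaceKernel_zero_left, hzero] using lintegral_eq 0 le_rfl
  · rw [integral_eq_lintegral_of_nonneg_ae (.of_forall fun y => (laplaceKernel_pos l y).le)
      (by fun_prop), lintegral_eq l hl, ENNReal.toReal_ofReal (hf.nonneg hl)]

end LaplaceRepresentation

section MeasurableFamily

variable {α : Type*} [MeasurableSpace α]

lemma measurable_of_measurable_lintegral_boundedContinuousFunction {X : Type*}
    [TopologicalSpace X] [MeasurableSpace X] [BorelSpace X] [HasOuterApproxClosed X]
    {ν : α → Measure X} [∀ a, IsProbabilityMeasure (ν a)]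
    (h : ∀ g : X →ᵇ ℝ≥0, Measurable fun a => ∫⁻ x, g x ∂ν a) : Measurable ν :=
  .measure_of_isPiSystem_of_isProbabilityMeasure
    (BorelSpace.measurable_eq.trans borel_eq_generateFrom_isClosed) isPiSystem_isClosed
    fun _ (hF : IsClosed _) => measurable_of_tendsto_metrizable (fun n => h (hF.apprSeq n))
      (tendsto_pi_nhds.2 fun a => HasOuterApproxClosed.tendsto_lintegral_apprSeq hF (ν a))

variable {K : Type*} [TopologicalSpace K] [CompactSpace K] [MeasurableSpace K] [BorelSpace K]

lemma integrable_continuousMap (μ : Measure K) [IsFiniteMeasure μ] (g : C(K, ℝ)) :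
    Integrable g μ :=
  g.continuous.integrable_of_hasCompactSupport (.of_compactSpace _)

lemma continuous_integral_continuousMap (μ : Measure K) [IsFiniteMeasure μ] :
    Continuous fun g : C(K, ℝ) => ∫ k, g k ∂μ :=
  (lipschitzOnWith_univ.1 <| lipschitzOnWith_integral (integrable_const 1)
    (fun g _ => integrable_continuousMap μ g) fun f _ g _ => .of_forall fun k => by
      simpa only [one_mul, Real.dist_eq] using
        ContinuousMap.dist_apply_le_dist (f := f) (g := g) k).continuous

lemma measurable_of_measurable_integral_submonoid [HasOuterApproxClosed K]
    {ν : α → Measure K} [∀ a, IsProbabilityMeasure (ν a)] (M : Submonoid C(K, ℝ))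
    (hM : ((fun g : C(K, ℝ) => (g : K → ℝ)) '' M).SeparatesPoints)
    (h : ∀ g ∈ M, Measurable fun a => ∫ k, g k ∂ν a) : Measurable ν := by
  let S : Submodule ℝ C(K, ℝ) :=
    { carrier := {g | Measurable fun a => ∫ k, g k ∂ν a}
      zero_mem' := by simp
      add_mem' := fun {f g} hf hg => by
        change Measurable fun a => ∫ k, (f + g) k ∂ν a
        convert hf.add hg using 2 with a
        exact integral_add (integrable_continuousMap (ν a) f) (integrable_continuousMap (ν a) g)
      smul_mem' := fun c g hg => by
        change Measurable fun a => ∫ k, (c • g) k ∂ν a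
        convert hg.const_mul c using 2 with a
        exact integral_const_mul c g }
  have isClosed_S : IsClosed (S : Set C(K, ℝ)) := IsSeqClosed.isClosed fun u g hu hug =>
    measurable_of_tendsto_metrizable hu (tendsto_pi_nhds.2 fun a =>
      ((continuous_integral_continuousMap (ν a)).tendsto g).comp hug)
  have adjoin_le : (Algebra.adjoin ℝ (M : Set C(K, ℝ)) : Set C(K, ℝ)) ⊆ S := by
    change Subalgebra.toSubmodule (Algebra.adjoin ℝ (M : Set C(K, ℝ))) ≤ S
    rw [Algebra.adjoin_eq_span, Submonoid.closure_eq]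
    exact Submodule.span_le.2 h
  have dense := ContinuousMap.subalgebra_topologicalClosure_eq_top_of_separatesPoints
    (Algebra.adjoin ℝ (M : Set C(K, ℝ))) fun a b hab => by
      obtain ⟨_, ⟨g, hg, rfl⟩, hgab⟩ := hM hab
      exact ⟨g, ⟨g, Algebra.subset_adjoin hg, rfl⟩, hgab⟩
  have mem_S (g : C(K, ℝ)) : g ∈ S :=
    closure_minimal adjoin_le isClosed_S (dense.ge (Algebra.mem_top : g ∈ _))
  refine measurable_of_measurable_lintegral_boundedContinuousFunction fun g => ?_
  have lintegral_eq (a : α) : ∫⁻ k, g k ∂ν a = ENNReal.ofReal (∫ k, (g k : ℝ) ∂ν a) := by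
    rw [← g.toReal_lintegral_coe_eq_integral,
      ENNReal.ofReal_toReal (g.lintegral_lt_top_of_nnreal (ν a)).ne]
  simp only [lintegral_eq]
  exact (mem_S ⟨fun k => g k, by fun_prop⟩).ennreal_ofReal

end MeasurableFamily

/-- The map `y ↦ (e^{-y₁}, e^{-y₂})` from `[0,∞)²` to the unit square, extended to the plane by
projecting to the square. -/
def expNegSquare (y : ℝ × ℝ) : unitInterval × unitInterval :=
  (projIcc 0 1 zero_le_one (Real.exp (-y.1)), projIcc 0 1 zero_le_one (Real.exp (-y.2)))

lemma continuous_expNegSquare : Continuous expNegSquare := by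
  unfold expNegSquare
  fun_prop

/-- The continuous functions on the unit square that become a Laplace kernel `e^{-⟨l, ·⟩}` in the
coordinates `k = (e^{-y₁}, e^{-y₂})`. -/
def laplaceKernelSubmonoid : Submonoid C(unitInterval × unitInterval, ℝ) where
  carrier := {g | ∃ l, 0 ≤ l ∧ ∀ y, 0 ≤ y → g (expNegSquare y) = laplaceKernel l y}
  one_mem' := ⟨0, le_rfl, fun y _ => (laplaceKernel_zero_left y).symm⟩
  mul_mem' := by
    rintro f g ⟨l, hl, hf⟩ ⟨m, hm, hg⟩
    refine ⟨l + m, add_nonneg hl hm, fun y hy => ?_⟩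
    rw [ContinuousMap.mul_apply, hf y hy, hg y hy, laplaceKernel_add_left]

lemma coe_projIcc_exp_neg {r : ℝ} (hr : 0 ≤ r) :
    (projIcc (0 : ℝ) 1 zero_le_one (Real.exp (-r)) : ℝ) = Real.exp (-r) := by
  rw [projIcc_of_mem zero_le_one ⟨(Real.exp_pos _).le, Real.exp_le_one_iff.2 (neg_nonpos.2 hr)⟩]

lemma separatesPoints_laplaceKernelSubmonoid :
    ((fun g : C(unitInterval × unitInterval, ℝ) => (g : unitInterval × unitInterval → ℝ)) ''
      laplaceKernelSubmonoid).SeparatesPoints := by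
  intro a b hab
  by_cases h₁ : a.1 = b.1
  · refine ⟨_, ⟨⟨fun k => (k.2 : ℝ), by fun_prop⟩,
      ⟨(0, 1), ⟨le_rfl, zero_le_one⟩, fun y hy => ?_⟩, rfl⟩,
      fun h₂ => hab (Prod.ext h₁ (Subtype.ext h₂))⟩
    simpa [laplaceKernel, expNegSquare] using coe_projIcc_exp_neg hy.2
  · refine ⟨_, ⟨⟨fun k => (k.1 : ℝ), by fun_prop⟩,
      ⟨(1, 0), ⟨zero_le_one, le_rfl⟩, fun y hy => ?_⟩, rfl⟩,
      fun h => h₁ (Subtype.ext h)⟩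
    simpa [laplaceKernel, expNegSquare] using coe_projIcc_exp_neg hy.1

theorem measurable_of_measurable_integral_laplaceKernel {α : Type*} [MeasurableSpace α]
    {ν : α → Measure (ℝ × ℝ)} [∀ a, IsProbabilityMeasure (ν a)] (hν : ∀ a, ∀ᵐ y ∂ν a, 0 ≤ y)
    (h : ∀ l, 0 ≤ l → Measurable fun a => ∫ y, laplaceKernel l y ∂ν a) : Measurable ν := by
  have measurable_exp : Measurable expNegSquare := continuous_expNegSquare.measurable
  have (a : α) : IsProbabilityMeasure ((ν a).map expNegSquare) :=
    Measure.isProbabilityMeasure_map measurable_exp.aemeasurable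
  have measurable_map : Measurable fun a => (ν a).map expNegSquare := by
    refine measurable_of_measurable_integral_submonoid laplaceKernelSubmonoid
      separatesPoints_laplaceKernelSubmonoid fun g ⟨l, hl, hg⟩ => ?_
    convert h l hl using 2 with a
    rw [integral_map measurable_exp.aemeasurable g.continuous.aestronglyMeasurable]
    exact integral_congr_ae ((hν a).mono hg)
  let negLog (k : unitInterval × unitInterval) : ℝ × ℝ := (-Real.log k.1, -Real.log k.2)
  have measurable_negLog : Measurable negLog := by fun_prop
  have negLog_exp : ∀ y, 0 ≤ y → negLog (expNegSquare y) = y := fun y hy => by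
    simp [negLog, expNegSquare, coe_projIcc_exp_neg hy.1, coe_projIcc_exp_neg hy.2]
  have map_map_eq (a : α) : ((ν a).map expNegSquare).map negLog = ν a := by
    rw [Measure.map_map measurable_negLog measurable_exp]
    exact (Measure.map_congr ((hν a).mono negLog_exp)).trans Measure.map_id
  rw [← funext map_map_eq]
  exact (Measure.measurable_map negLog measurable_negLog).comp measurable_map

namespace HasLaplaceTransform

variable {E : Set (ℝ × ℝ)} {f : ℝ × ℝ → ℝ} {μ ν : Measure (ℝ × ℝ)}

lemma ae_nonneg (h : HasLaplaceTransform μ E f) (hE : E ⊆ Ici 0) : ∀ᵐ y ∂μ, 0 ≤ y :=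
  measure_mono_null (compl_subset_compl.2 hE) h.measure_compl

lemma lintegral_laplaceKernel (h : HasLaplaceTransform μ E f) (hE : E ⊆ Ici 0) {l : ℝ × ℝ}
    (hl : 0 ≤ l) : ∫⁻ y, ENNReal.ofReal (laplaceKernel l y) ∂μ = ENNReal.ofReal (f l) := by
  have := h.isProbabilityMeasure
  rw [← h.integral_laplaceKernel l hl, ofReal_integral_eq_lintegral_ofReal]
  · refine .of_bound (by fun_prop) 1 ((h.ae_nonneg hE).mono fun y hy => ?_)
    rw [Real.norm_of_nonneg (laplaceKernel_pos l y).le]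
    exact laplaceKernel_le_one hl hy
  · exact .of_forall fun y => (laplaceKernel_pos l y).le

/- A family with a constant Laplace transform is measurable even for the trivial σ-algebra on its
index set, hence constant. -/
protected theorem unique (hμ : HasLaplaceTransform μ E f) (hν : HasLaplaceTransform ν E f)
    (hE : E ⊆ Ici 0) : μ = ν := by
  let family (b : Bool) : Measure (ℝ × ℝ) := cond b μ ν
  have hfamily : ∀ b, HasLaplaceTransform (family b) E f := by simp [family, hμ, hν]
  have (b : Bool) : IsProbabilityMeasure (family b) := (hfamily b).isProbabilityMeasure
  have measurable_family : Measurable[⊥] family :=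
    @measurable_of_measurable_integral_laplaceKernel _ ⊥ family _
      (fun b => (hfamily b).ae_nonneg hE) fun l hl => by
        simp only [fun b => (hfamily b).integral_laplaceKernel l hl, measurable_const]
  ext A hA
  obtain ⟨c, hc⟩ :=
    eq_const_of_measurable_bot ((Measure.measurable_coe hA).comp measurable_family)
  exact (congrFun hc true).trans (congrFun hc false).symm

variable {κ : ℝ × ℝ → Measure (ℝ × ℝ)} {v : ℝ × ℝ → ℝ × ℝ}

lemma aemeasurable_kernel (hμ : μ Eᶜ = 0) (hmeas : MeasurableSet E) (hE : E ⊆ Ici 0)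
    (hκ : ∀ x ∈ E, HasLaplaceTransform (κ x) E fun l => laplaceKernel x (v l)) :
    AEMeasurable κ μ := by
  have (x : E) : IsProbabilityMeasure (κ x) := (hκ x x.2).isProbabilityMeasure
  rw [← Measure.restrict_eq_self_of_ae_mem hμ]
  refine aemeasurable_restrict_of_measurable_subtype hmeas
    (measurable_of_measurable_integral_laplaceKernel (fun x => (hκ x x.2).ae_nonneg hE)
      fun l hl => ?_)
  simp only [fun x : E => (hκ x x.2).integral_laplaceKernel l hl]
  exact ((continuous_laplaceKernel_left (v l)).comp continuous_subtype_val).measurable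

theorem bind (hμ : HasLaplaceTransform μ E f) (hmeas : MeasurableSet E) (hE : E ⊆ Ici 0)
    (hv : ∀ l, 0 ≤ l → 0 ≤ v l)
    (hκ : ∀ x ∈ E, HasLaplaceTransform (κ x) E fun l => laplaceKernel x (v l)) :
    HasLaplaceTransform (μ.bind κ) E fun l => f (v l) := by
  have := hμ.isProbabilityMeasure
  have aemeasurable_κ := aemeasurable_kernel hμ.measure_compl hmeas hE hκ
  have ae_mem : ∀ᵐ x ∂μ, x ∈ E := hμ.measure_compl
  refine ⟨⟨?_⟩, ?_, fun l hl => ?_⟩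
  · rw [Measure.bind_apply .univ aemeasurable_κ,
      lintegral_congr_ae (ae_mem.mono fun x hx => (hκ x hx).isProbabilityMeasure.measure_univ)]
    simp only [lintegral_one, measure_univ]
  · rw [Measure.bind_apply hmeas.compl aemeasurable_κ,
      lintegral_congr_ae (ae_mem.mono fun x hx => (hκ x hx).measure_compl), lintegral_zero]
  · have kernel_nonneg (m y : ℝ × ℝ) : 0 ≤ laplaceKernel m y := (laplaceKernel_pos m y).le
    have lintegral_eq : ∫⁻ y, ENNReal.ofReal (laplaceKernel l y) ∂μ.bind κ =
        ∫⁻ x, ENNReal.ofReal (laplaceKernel (v l) x) ∂μ := by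
      rw [Measure.lintegral_bind aemeasurable_κ
        (continuous_laplaceKernel l).measurable.ennreal_ofReal.aemeasurable]
      refine lintegral_congr_ae (ae_mem.mono fun x hx => ?_)
      simp only [(hκ x hx).lintegral_laplaceKernel hE hl, laplaceKernel_comm x]
    rw [← hμ.integral_laplaceKernel (v l) (hv l hl),
      integral_eq_lintegral_of_nonneg_ae (.of_forall (kernel_nonneg l)) (by fun_prop),
      integral_eq_lintegral_of_nonneg_ae (.of_forall (kernel_nonneg _)) (by fun_prop),
      lintegral_eq]

end HasLaplaceTransform

namespace IsCumulantFlow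

variable {B : BranchingMechanism} {V : ℝ → ℝ × ℝ → ℝ × ℝ} {s t : ℝ} {x : ℝ × ℝ}

theorem exists_transition (hV : IsCumulantFlow B V) (ht : 0 ≤ t) (hx : x ∈ Mset) :
    ∃ μ, HasLaplaceTransform μ Mset fun l => laplaceKernel x (V t l) := by
  refine (hV.laplacePositive ht hx).exists_hasLaplaceTransform isClosed_Mset
    (fun _ => Mset_nonneg) ((continuous_laplaceKernel x).comp_continuousOn (hV.continuousOn ht)) ?_
  rw [(hV 0 le_rfl).eq_zero ht, laplaceKernel_comm, laplaceKernel_zero_left]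

theorem bind_transition {P : ℝ → ℝ × ℝ → Measure (ℝ × ℝ)} (hV : IsCumulantFlow B V)
    (hP : ∀ t, 0 ≤ t → ∀ x ∈ Mset,
      HasLaplaceTransform (P t x) Mset fun l => laplaceKernel x (V t l))
    (hs : 0 ≤ s) (ht : 0 ≤ t) (hx : x ∈ Mset) : (P t x).bind (P s) = P (t + s) x := by
  have bind_transform := (hP t ht x hx).bind isClosed_Mset.measurableSet (fun _ => Mset_nonneg)
    (fun l hl => (hV l hl).2.1 s hs) (hP s hs)
  refine HasLaplaceTransform.unique ⟨bind_transform.1, bind_transform.2, fun l hl => ?_⟩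
    (hP (t + s) (add_nonneg ht hs) x hx) fun _ => Mset_nonneg
  rw [bind_transform.3 l hl, hV.apply_add hs ht hl, add_comm]

end IsCumulantFlow

/-- Given a branching mechanism and the solution `V` of the cumulant
equations, for every `t ≥ 0` and `x ∈ 𝕄` there exists a unique Borel probability
measure `P_t(x,·)` on `𝕄` with Laplace transform
`∫ e^{-⟨λ,y⟩} P_t(x,dy) = exp(-⟨x, V(t,λ)⟩)`, and these measures form a Markov
transition semigroup (Chapman–Kolmogorov). -/
theorem transition_semigroup_exists (B : BranchingMechanism)
    (V : ℝ → (ℝ × ℝ) → ℝ × ℝ)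
    (hV : ∀ l : ℝ × ℝ, 0 ≤ l.1 → 0 ≤ l.2 → SolvesCumulant B l (fun t => V t l)) :
    ∃ P : ℝ → (ℝ × ℝ) → Measure (ℝ × ℝ),
      (∀ t : ℝ, 0 ≤ t → ∀ x ∈ Mset,
        IsProbabilityMeasure (P t x) ∧ P t x Msetᶜ = 0 ∧
        (∀ l : ℝ × ℝ, 0 ≤ l.1 → 0 ≤ l.2 →
          ∫ y, Real.exp (-(l.1 * y.1 + l.2 * y.2)) ∂(P t x)
            = Real.exp (-(x.1 * (V t l).1 + x.2 * (V t l).2))) ∧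
        -- uniqueness
        (∀ μ : Measure (ℝ × ℝ), IsProbabilityMeasure μ → μ Msetᶜ = 0 →
          (∀ l : ℝ × ℝ, 0 ≤ l.1 → 0 ≤ l.2 →
            ∫ y, Real.exp (-(l.1 * y.1 + l.2 * y.2)) ∂μ
              = Real.exp (-(x.1 * (V t l).1 + x.2 * (V t l).2))) →
          μ = P t x)) ∧
      -- Chapman–Kolmogorov: ∫ P_s(y, A) P_t(x, dy) = P_{t+s}(x, A)
      (∀ s t : ℝ, 0 ≤ s → 0 ≤ t → ∀ x ∈ Mset, ∀ A : Set (ℝ × ℝ), MeasurableSet A →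
        ∫⁻ y, P s y A ∂(P t x) = P (t + s) x A) := by
  have flow : IsCumulantFlow B V := fun l hl => hV l hl.1 hl.2
  have hex : ∀ t, 0 ≤ t → ∀ x ∈ Mset, ∃ μ, HasLaplaceTransform μ Mset fun l =>
      laplaceKernel x (V t l) := fun t ht x hx => flow.exists_transition ht hx
  choose! P hP using hex
  refine ⟨P, fun t ht x hx => ?_, fun s t hs ht x hx A hA => ?_⟩
  · obtain ⟨hprob, hsupp, htransform⟩ := hP t ht x hx
    refine ⟨hprob, hsupp, fun l hl₁ hl₂ => htransform l ⟨hl₁, hl₂⟩, fun μ hμ hμsupp hμt => ?_⟩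
    exact HasLaplaceTransform.unique ⟨hμ, hμsupp, fun l hl => hμt l hl.1 hl.2⟩ (hP t ht x hx)
      fun _ => Mset_nonneg
  · rw [← flow.bind_transition hP hs ht hx, Measure.bind_apply hA]
    exact HasLaplaceTransform.aemeasurable_kernel (hP t ht x hx).measure_compl
      isClosed_Mset.measurableSet (fun _ => Mset_nonneg) (hP s hs)
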